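/- Let G : ℓ^m → ℓ^r be strictly causal and exponentially stable (G maps every exponentially decaying sequence to an exponentially decaying sequence). Let Ψ^{u°} : ℓ^r × ℓ^m → ℓ^m be causal–strictly-causal, and define Ψ^u(v,d) := d + Ψ^{u°}(v,d) and Ψ^y(v,d) := G(Ψ^u(v,d)) + v. Then the map (Ψ^y, Ψ^u) is exponentially stable — i.e., Ψ^y(v,d) and Ψ^u(v,d) are exponentially decaying whenever v and d are exponentially decaying — if and only if Ψ^{u°} is exponentially stable, i.e., Ψ^{u°}(v,d) is exponentially decaying whenever v and d are exponentially decaying. -/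

import Mathlib

/-- Sequences with values in `ℝ^n` (with the Euclidean norm). -/
abbrev Traj (n : ℕ) : Type := ℕ → EuclideanSpace ℝ (Fin n)

/-- A causal operator on sequences. -/
def Causal {n m : ℕ} (A : Traj n → Traj m) : Prop :=
  ∀ (x x' : Traj n) (t : ℕ), (∀ s, s ≤ t → x s = x' s) → A x t = A x' t

/-- A strictly causal operator on sequences. -/
def StrictlyCausal {n m : ℕ} (A : Traj n → Traj m) : Prop :=
  ∀ (x x' : Traj n) (t : ℕ), (∀ s, s < t → x s = x' s) → A x t = A x' t

/-- Causal in the first argument, strictly causal in the second argument. -/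
def CausalSC {n q m : ℕ} (B : Traj n → Traj q → Traj m) : Prop :=
  ∀ (x x' : Traj n) (z z' : Traj q) (t : ℕ),
    (∀ s, s ≤ t → x s = x' s) → (∀ s, s < t → z s = z' s) → B x z t = B x' z' t

/-- Causal in both arguments. -/
def CausalCC {n q m : ℕ} (B : Traj n → Traj q → Traj m) : Prop :=
  ∀ (x x' : Traj n) (z z' : Traj q) (t : ℕ),
    (∀ s, s ≤ t → x s = x' s) → (∀ s, s ≤ t → z s = z' s) → B x z t = B x' z' t

/-- Strictly causal in both arguments. -/
def CausalSS {n q m : ℕ} (B : Traj n → Traj q → Traj m) : Prop :=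
  ∀ (x x' : Traj n) (z z' : Traj q) (t : ℕ),
    (∀ s, s < t → x s = x' s) → (∀ s, s < t → z s = z' s) → B x z t = B x' z' t

/-- Membership in `ℓ_p`: summability of `‖x t‖ ^ p`. -/
def InLp (p : ℝ) {E : Type*} [Norm E] (x : ℕ → E) : Prop :=
  Summable fun t => ‖x t‖ ^ p

/-- The `ℓ_p` norm `(∑ₜ ‖x t‖ ^ p) ^ (1/p)` of a sequence. -/
noncomputable def lpSeqNorm (p : ℝ) {E : Type*} [Norm E] (x : ℕ → E) : ℝ :=
  (∑' t, ‖x t‖ ^ p) ^ (1 / p)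

/-- The `ℝ^{r+m}`-valued sequence obtained by stacking `v` and `d`
(the norm of `(v t, d t)` is the Euclidean norm of the concatenated vector). -/
noncomputable def pairSeq {r m : ℕ} (v : Traj r) (d : Traj m) :
    ℕ → WithLp 2 (EuclideanSpace ℝ (Fin r) × EuclideanSpace ℝ (Fin m)) :=
  fun t => (WithLp.equiv 2 _).symm (v t, d t)

/-- An exponentially decaying sequence: `‖x t‖ ≤ k · α ^ t` with `k > 0`, `α ∈ (0,1)`. -/
def ExpDecay {E : Type*} [Norm E] (x : ℕ → E) : Prop :=
  ∃ k : ℝ, 0 < k ∧ ∃ α : ℝ, 0 < α ∧ α < 1 ∧ ∀ t, ‖x t‖ ≤ k * α ^ t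

/-!
Exponentially decaying sequences form an additive group, so `d + Ψ^{u°}(v,d)` decays
exponentially exactly when `Ψ^{u°}(v,d)` does, for each fixed decaying `d`. When they do,
stability of `G` makes the remaining closed-loop output `G(d + Ψ^{u°}(v,d)) + v` decay as well.
-/

section ExpDecay

variable {E : Type*} [SeminormedAddGroup E] {x y : ℕ → E}

theorem ExpDecay.add (hx : ExpDecay x) (hy : ExpDecay y) : ExpDecay (x + y) := by
  obtain ⟨k, hk, α, hα, hα_lt, hx_le⟩ := hx
  obtain ⟨l, hl, β, hβ, hβ_lt, hy_le⟩ := hy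
  refine ⟨k + l, add_pos hk hl, max α β, lt_max_of_lt_left hα, max_lt hα_lt hβ_lt, fun t => ?_⟩
  calc ‖x t + y t‖ ≤ ‖x t‖ + ‖y t‖ := norm_add_le _ _
    _ ≤ k * α ^ t + l * β ^ t := add_le_add (hx_le t) (hy_le t)
    _ ≤ k * max α β ^ t + l * max α β ^ t := by
      gcongr
      · exact le_max_left α β
      · exact le_max_right α β
    _ = (k + l) * max α β ^ t := (add_mul _ _ _).symm

theorem ExpDecay.neg (hx : ExpDecay x) : ExpDecay (-x) := by
  simpa only [ExpDecay, Pi.neg_apply, norm_neg] using hx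

theorem ExpDecay.add_iff_right (hx : ExpDecay x) : ExpDecay (x + y) ↔ ExpDecay y :=
  ⟨fun hxy => neg_add_cancel_left x y ▸ hx.neg.add hxy, hx.add⟩

end ExpDecay

theorem statement18_general {E F : Type*} [SeminormedAddGroup E] [SeminormedAddGroup F]
    (G : (ℕ → E) → (ℕ → F)) (hG : ∀ u, ExpDecay u → ExpDecay (G u))
    (Ψuo : (ℕ → F) → (ℕ → E) → (ℕ → E)) :
    (∀ v d, ExpDecay v → ExpDecay d →
        ExpDecay (G (d + Ψuo v d) + v) ∧ ExpDecay (d + Ψuo v d)) ↔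
      ∀ v d, ExpDecay v → ExpDecay d → ExpDecay (Ψuo v d) := by
  refine forall₄_congr fun v d hv hd => ?_
  have hy_of_hu (hu : ExpDecay (d + Ψuo v d)) : ExpDecay (G (d + Ψuo v d) + v) :=
    (hG _ hu).add hv
  rw [and_iff_right_of_imp hy_of_hu, hd.add_iff_right]

/-- for a strictly causal exponentially stable plant `G` and a
causal–strictly-causal parameter `Ψ^{u°}`, the closed-loop maps
`Ψ^u(v,d) = d + Ψ^{u°}(v,d)`, `Ψ^y(v,d) = G(Ψ^u(v,d)) + v` are exponentially stable iff
`Ψ^{u°}` is exponentially stable. -/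
theorem statement18 {r m : ℕ} (G : Traj m → Traj r)
    (hG : StrictlyCausal G)
    (hGexp : ∀ u : Traj m, ExpDecay u → ExpDecay (G u))
    (Ψuo : Traj r → Traj m → Traj m)
    (hΨuo : CausalSC Ψuo) :
    ((∀ (v : Traj r) (d : Traj m), ExpDecay v → ExpDecay d →
        ExpDecay (G (d + Ψuo v d) + v) ∧ ExpDecay (d + Ψuo v d))
      ↔
      (∀ (v : Traj r) (d : Traj m), ExpDecay v → ExpDecay d → ExpDecay (Ψuo v d))) :=
  statement18_general G hGexp Ψuo
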